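/- Every time optimal trajectory of (Σ) is a finite concatenation of bang and singular arcs: if γ is a time optimal trajectory on [a,b] with control u, then there exists a finite partition a = τ₀ < τ₁ < ... < τ_n = b such that on each subinterval [τ_i, τ_{i+1}], u is almost everywhere equal to one of the constants 1, −1, or 0. -/

import Mathlib

open Real MeasureTheory intervalIntegral Matrix

/-- The drift matrix `f = cos α · ![![0,1,0],![-1,0,0],![0,0,0]]`. -/
noncomputable def fM (α : ℝ) : Matrix (Fin 3) (Fin 3) ℝ :=
  Real.cos α • !![0,1,0; -1,0,0; 0,0,0]

/-- The controlled matrix `g = sin α · ![![0,0,0],![0,0,1],![0,-1,0]]`. -/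
noncomputable def gM (α : ℝ) : Matrix (Fin 3) (Fin 3) ℝ :=
  Real.sin α • !![0,0,0; 0,0,1; 0,-1,0]

/-- An admissible pair for `(Σ)` on `[a,b]`: a measurable control `u : [a,b] → [-1,1]`
together with an absolutely continuous curve `γ : [a,b] → SO(3)` solving
`γ' = γ·(f + u·g)` a.e. (expressed in integral form, entrywise). -/
structure AdmissiblePair (α a b : ℝ) (γ : ℝ → Matrix (Fin 3) (Fin 3) ℝ) (u : ℝ → ℝ) : Prop where
  hab : a ≤ b
  humeas : Measurable u
  hubound : ∀ t ∈ Set.Icc a b, |u t| ≤ 1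
  hso3 : ∀ t ∈ Set.Icc a b, γ t * (γ t).transpose = 1 ∧ (γ t).det = 1
  hcont : ContinuousOn γ (Set.Icc a b)
  hode : ∀ t ∈ Set.Icc a b, ∀ i j,
    γ t i j = γ a i j + ∫ s in a..t, (γ s * (fM α + u s • gM α)) i j

/-- Time optimality for `(Σ)`. -/
def TimeOptimal (α a b : ℝ) (γ : ℝ → Matrix (Fin 3) (Fin 3) ℝ) (u : ℝ → ℝ) : Prop :=
  AdmissiblePair α a b γ u ∧
  ∀ a' b' γ' u', AdmissiblePair α a' b' γ' u' →
    γ' a' = γ a → γ' b' = γ b → b - a ≤ b' - a'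

/-- `t` is a switching time of the control `u : [a,b] → [-1,1]`: in no neighbourhood of `t`
is `u` a.e. equal to a constant `c ∈ {-1,1}`. -/
def IsSwitching (a b : ℝ) (u : ℝ → ℝ) (t : ℝ) : Prop :=
  t ∈ Set.Icc a b ∧ ∀ ε > 0, ¬ ∃ c : ℝ, (c = 1 ∨ c = -1) ∧
    ∀ᵐ s ∂(volume.restrict (Set.Ioo (t - ε) (t + ε) ∩ Set.Icc a b)), u s = c

/-!
Changes of the control move the end point of `γ` to first order by a convex set of vectors in
`so(3)`. If `0` were interior to this set, changes of the control could compensate for a slight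
slowing down of the motion, so that the end point would also be reached with drift `θ f` and
controls bounded by `θ` for some `θ < 1`; speeding this up by the factor `θ⁻¹` contradicts time
optimality. Hence a covector separates `0` from the set, and transporting it along `γ` gives
functions `m₁, m₂, m₃`, without common zero, that satisfy Pontryagin's equations.

Where `m₂ ≠ 0` the control is `±1`, and on an interval where `m₂ = 0` also `m₃ = 0`, which forces
`u = 0`. The conservation of `m₁² + m₂² + m₃²` and of the Hamiltonian shows that, near a common zero
of `m₂` and `m₃`, the function `m₃` does not vanish where `m₂` does not; by Rolle's theorem, `m₂` is
then either identically zero or without zeros on a short interval on each side of any time.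
Compactness of `[a, b]` leaves finitely many arcs.
-/

open Filter Topology

section AbsolutelyContinuous

variable {X Y : Type*} [PseudoMetricSpace X] [PseudoMetricSpace Y] {a b : ℝ}

theorem absolutelyContinuousOnInterval_of_dist_le {f : ℝ → X} {g : ℝ → Y} (C : ℝ)
    (hg : AbsolutelyContinuousOnInterval g a b)
    (hle : ∀ x ∈ Set.uIcc a b, ∀ y ∈ Set.uIcc a b, dist (f x) (f y) ≤ C * dist (g x) (g y)) :
    AbsolutelyContinuousOnInterval f a b := by
  have hlim := Tendsto.const_mul C hg
  rw [mul_zero] at hlim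
  refine squeeze_zero' (Eventually.of_forall fun _ => Finset.sum_nonneg fun _ _ => dist_nonneg) ?_
    hlim
  filter_upwards [mem_inf_of_right (mem_principal_self _)] with I hI
  rw [Finset.mul_sum]
  exact Finset.sum_le_sum fun i hi => hle _ (hI.1 i hi).1 _ (hI.1 i hi).2

theorem absolutelyContinuousOnInterval_prodMk {f : ℝ → X} {g : ℝ → Y}
    (hf : AbsolutelyContinuousOnInterval f a b) (hg : AbsolutelyContinuousOnInterval g a b) :
    AbsolutelyContinuousOnInterval (fun t => (f t, g t)) a b := by
  have hlim := Tendsto.add hf hg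
  rw [add_zero] at hlim
  refine squeeze_zero (fun _ => Finset.sum_nonneg fun _ _ => dist_nonneg) (fun I => ?_) hlim
  rw [← Finset.sum_add_distrib]
  exact Finset.sum_le_sum fun i _ => max_le_add_of_nonneg dist_nonneg dist_nonneg

/-- `F` is absolutely continuous on the interval with end points `a` and `b`, and `f` is its
derivative almost everywhere there. -/
structure HasACDerivOn {E : Type*} [NormedAddCommGroup E] [NormedSpace ℝ E]
    (F f : ℝ → E) (a b : ℝ) : Prop where
  ac : AbsolutelyContinuousOnInterval F a b
  ae_hasDerivAt : ∀ᵐ t, t ∈ Set.uIcc a b → HasDerivAt F (f t) t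

end AbsolutelyContinuous

namespace HasACDerivOn

section NormedSpace

variable {E E' : Type*} [NormedAddCommGroup E] [NormedSpace ℝ E] [NormedAddCommGroup E']
  [NormedSpace ℝ E'] {F f G g : ℝ → E} {a b : ℝ}

theorem const (v : E) (a b : ℝ) : HasACDerivOn (fun _ => v) (fun _ => 0) a b where
  ac := (LipschitzWith.const v).lipschitzOnWith.absolutelyContinuousOnInterval
  ae_hasDerivAt := Eventually.of_forall fun t _ => hasDerivAt_const t v

theorem add (hF : HasACDerivOn F f a b) (hG : HasACDerivOn G g a b) :
    HasACDerivOn (fun t => F t + G t) (fun t => f t + g t) a b where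
  ac := hF.ac.fun_add hG.ac
  ae_hasDerivAt := by
    filter_upwards [hF.ae_hasDerivAt, hG.ae_hasDerivAt] with t hFt hGt ht
    exact (hFt ht).add (hGt ht)

theorem clm_comp (L : E →L[ℝ] E') (hF : HasACDerivOn F f a b) :
    HasACDerivOn (fun t => L (F t)) (fun t => L (f t)) a b where
  ac := absolutelyContinuousOnInterval_of_dist_le ‖L‖ hF.ac fun _ _ _ _ => L.dist_le_opNorm _ _
  ae_hasDerivAt := by
    filter_upwards [hF.ae_hasDerivAt] with t hFt ht
    exact L.hasFDerivAt.comp_hasDerivAt t (hFt ht)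

theorem congr_deriv (hF : HasACDerivOn F f a b) (h : ∀ t ∈ Set.uIcc a b, f t = g t) :
    HasACDerivOn F g a b where
  ac := hF.ac
  ae_hasDerivAt := by
    filter_upwards [hF.ae_hasDerivAt] with t hFt ht
    exact h t ht ▸ hFt ht

theorem mono (hF : HasACDerivOn F f a b) {x y : ℝ} (h : Set.uIcc x y ⊆ Set.uIcc a b) :
    HasACDerivOn F f x y where
  ac := hF.ac.mono h
  ae_hasDerivAt := hF.ae_hasDerivAt.mono fun _ hFt ht => hFt (h ht)

theorem eq_of_deriv_eq_zero (hF : HasACDerivOn F f a b) (h : ∀ t ∈ Set.uIcc a b, f t = 0) :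
    ∀ x ∈ Set.uIcc a b, ∀ y ∈ Set.uIcc a b, F x = F y := by
  obtain ⟨C, hC⟩ := hF.ac.const_of_ae_hasDerivAt_zero (hF.congr_deriv h).ae_hasDerivAt
  exact fun x hx y hy => (hC x hx).trans (hC y hy).symm

theorem of_integral [CompleteSpace E] (hf : IntervalIntegrable f volume a b)
    (h : ∀ t ∈ Set.uIcc a b, F t = F a + ∫ s in a..t, f s) : HasACDerivOn F f a b where
  ac := by
    refine absolutelyContinuousOnInterval_of_dist_le 1
      (hf.norm.absolutelyContinuousOnInterval_intervalIntegral Set.left_mem_uIcc)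
      fun x hx y hy => ?_
    have hint {z : ℝ} (hz : z ∈ Set.uIcc a b) : IntervalIntegrable f volume a z :=
      hf.mono_set (Set.uIcc_subset_uIcc_left hz)
    rw [h x hx, h y hy, dist_add_left, dist_eq_norm, Real.dist_eq, one_mul,
      integral_interval_sub_left (hint hx) (hint hy),
      integral_interval_sub_left (hint hx).norm (hint hy).norm]
    exact norm_integral_le_abs_integral_norm
  ae_hasDerivAt := by
    have ne_endpoint (c : ℝ) : ∀ᵐ t : ℝ, t ≠ c := by simp [ae_iff]
    filter_upwards [hf.ae_hasDerivAt_integral, ne_endpoint (min a b), ne_endpoint (max a b)]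
      with t hderiv hmin hmax ht
    refine ((hderiv ht a Set.left_mem_uIcc).const_add (F a)).congr_of_eventuallyEq ?_
    filter_upwards [Icc_mem_nhds (ht.1.lt_of_ne' hmin) (ht.2.lt_of_ne hmax)] with s hs
    exact h s hs

end NormedSpace

theorem mul {A : Type*} [NormedRing A] [NormedAlgebra ℝ A] {F f G g : ℝ → A} {a b : ℝ}
    (hF : HasACDerivOn F f a b) (hG : HasACDerivOn G g a b) :
    HasACDerivOn (fun t => F t * G t) (fun t => f t * G t + F t * g t) a b where
  ac := by
    obtain ⟨C, hC⟩ := hF.ac.exists_bound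
    obtain ⟨D, hD⟩ := hG.ac.exists_bound
    refine absolutelyContinuousOnInterval_of_dist_le (D + C)
      (absolutelyContinuousOnInterval_prodMk hF.ac hG.ac) fun x hx y hy => ?_
    calc dist (F x * G x) (F y * G y) = ‖(F x - F y) * G x + F y * (G x - G y)‖ := by
          rw [dist_eq_norm]; congr 1; noncomm_ring
      _ ≤ ‖F x - F y‖ * ‖G x‖ + ‖F y‖ * ‖G x - G y‖ :=
          (norm_add_le _ _).trans (add_le_add (norm_mul_le _ _) (norm_mul_le _ _))
      _ ≤ dist (F x, G x) (F y, G y) * D + C * dist (F x, G x) (F y, G y) := by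
          have := (norm_nonneg _).trans (hC y hy)
          gcongr
          · exact (dist_eq_norm (F x) (F y)).symm.trans_le (le_max_left _ _)
          · exact hD x hx
          · exact hC y hy
          · exact (dist_eq_norm (G x) (G y)).symm.trans_le (le_max_right _ _)
      _ = (D + C) * dist (F x, G x) (F y, G y) := by ring
  ae_hasDerivAt := by
    filter_upwards [hF.ae_hasDerivAt, hG.ae_hasDerivAt] with t hFt hGt ht
    exact (hFt ht).mul (hGt ht)

section Real

variable {F f : ℝ → ℝ} {a b : ℝ}

theorem integral_eq (hF : HasACDerivOn F f a b) {x y : ℝ} (hx : x ∈ Set.uIcc a b)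
    (hy : y ∈ Set.uIcc a b) : ∫ t in x..y, f t = F y - F x := by
  have hxy := hF.mono (Set.uIcc_subset_uIcc hx hy)
  rw [← hxy.ac.integral_deriv_eq_sub]
  refine integral_congr_ae ?_
  filter_upwards [hxy.ae_hasDerivAt] with t hderiv ht
  exact (hderiv (Set.uIoc_subset_uIcc ht)).deriv.symm

theorem hasDerivAt_of_continuousOn (hF : HasACDerivOn F f a b)
    (hf : ContinuousOn f (Set.uIcc a b)) {t : ℝ} (ht : t ∈ Set.uIoo a b) :
    HasDerivAt F (f t) t := by
  have hnhds : Set.uIcc a b ∈ 𝓝 t := Icc_mem_nhds ht.1 ht.2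
  have htI : t ∈ Set.uIcc a b := mem_of_mem_nhds hnhds
  have hprim : HasDerivAt (fun y => F a + ∫ s in a..y, f s) (f t) t :=
    (integral_hasDerivAt_right (hf.intervalIntegrable.mono_set (Set.uIcc_subset_uIcc_left htI))
      (hf.stronglyMeasurableAtFilter_nhdsWithin measurableSet_Icc t |>.filter_mono
        (nhdsWithin_eq_nhds.2 hnhds).ge) (hf.continuousAt hnhds)).const_add (F a)
  refine hprim.congr_of_eventuallyEq ?_
  filter_upwards [hnhds] with y hy
  rw [hF.integral_eq Set.left_mem_uIcc hy, add_sub_cancel]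

end Real

end HasACDerivOn

section OneSided

theorem eventually_nhdsGT_forall_Ioo_or_eventually_forall_Ioo_not {X : Type*} [LinearOrder X]
    [TopologicalSpace X] [OrderTopology X] [NoMaxOrder X] {t : X} {p : X → Prop}
    (h : ∀ᶠ x in 𝓝[>] t, p x → ∀ y ∈ Set.Ioo t x, p y) :
    (∀ᶠ x in 𝓝[>] t, ∀ y ∈ Set.Ioo t x, p y) ∨ ∀ᶠ x in 𝓝[>] t, ∀ y ∈ Set.Ioo t x, ¬p y := by
  by_cases hfreq : ∃ᶠ x in 𝓝[>] t, p x
  · obtain ⟨x, hpx, hx, htx⟩ := (hfreq.and_eventually (h.and self_mem_nhdsWithin)).exists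
    left
    filter_upwards [Ioo_mem_nhdsGT htx] with x' hx' y hy
    exact hx hpx y ⟨hy.1, hy.2.trans hx'.2⟩
  · obtain ⟨x, htx, hx⟩ := (nhdsGT_basis t).eventually_iff.1 (not_frequently.1 hfreq)
    right
    filter_upwards [Ioo_mem_nhdsGT htx] with x' hx' y hy
    exact hx ⟨hy.1, hy.2.trans hx'.2⟩

theorem eventually_nhdsLT_forall_Ioo_or_eventually_forall_Ioo_not {X : Type*} [LinearOrder X]
    [TopologicalSpace X] [OrderTopology X] [NoMinOrder X] {t : X} {p : X → Prop}
    (h : ∀ᶠ x in 𝓝[<] t, p x → ∀ y ∈ Set.Ioo x t, p y) :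
    (∀ᶠ x in 𝓝[<] t, ∀ y ∈ Set.Ioo x t, p y) ∨ ∀ᶠ x in 𝓝[<] t, ∀ y ∈ Set.Ioo x t, ¬p y := by
  have hdual := eventually_nhdsGT_forall_Ioo_or_eventually_forall_Ioo_not (X := Xᵒᵈ)
    (t := OrderDual.toDual t) (p := p) (h.mono fun x hx hpx y hy => hx hpx y hy.symm)
  exact hdual.imp (fun h => h.mono fun x hx y hy => hx y hy.symm)
    fun h => h.mono fun x hx y hy => hx y hy.symm

theorem eq_zero_of_hasDerivAt_ne_zero {g g' : ℝ → ℝ} {x y : ℝ} (hg : ContinuousOn g (Set.uIcc x y))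
    (hg' : ∀ z ∈ Set.uIoo x y, HasDerivAt g (g' z) z) (hx : g x = 0) (hy : g y = 0)
    (hne : ∀ z ∈ Set.uIoo x y, g z ≠ 0 → g' z ≠ 0) : ∀ z ∈ Set.uIcc x y, g z = 0 := by
  by_contra! ⟨w, hw, hgw⟩
  obtain ⟨z, hz, hmax⟩ := isCompact_uIcc.exists_isMaxOn ⟨w, hw⟩ (hg.mul hg)
  have hgz : g z ≠ 0 := fun h => (mul_self_pos.2 hgw).not_ge (by simpa [h] using hmax hw)
  have hzx : z ≠ x := fun h => hgz (h ▸ hx)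
  have hzy : z ≠ y := fun h => hgz (h ▸ hy)
  have hz' : z ∈ Set.uIoo x y := ⟨hz.1.lt_of_ne' (by grind), hz.2.lt_of_ne (by grind)⟩
  have hcrit := (hmax.isLocalMax (Icc_mem_nhds hz'.1 hz'.2)).hasDerivAt_eq_zero
    ((hg' z hz').mul (hg' z hz'))
  exact mul_ne_zero (hne z hz' hgz) hgz (by linarith)

theorem reflTransGen_of_eventually_nhdsLT_of_frequently_nhdsGT {a b : ℝ} {P : ℝ → ℝ → Prop}
    (hab : a ≤ b) (hright : ∀ t ∈ Set.Ico a b, ∃ᶠ x in 𝓝[>] t, P t x)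
    (hleft : ∀ t ∈ Set.Ioc a b, ∀ᶠ x in 𝓝[<] t, P x t) :
    Relation.ReflTransGen (fun x y => x < y ∧ P x y) a b := by
  set S := {y ∈ Set.Icc a b | Relation.ReflTransGen (fun x y => x < y ∧ P x y) a y}
  have haS : a ∈ S := ⟨Set.left_mem_Icc.2 hab, .refl⟩
  have hbdd : BddAbove S := ⟨b, fun y hy => hy.1.2⟩
  have hsup : sSup S ∈ Set.Icc a b := ⟨le_csSup hbdd haS, csSup_le ⟨a, haS⟩ fun y hy => hy.1.2⟩
  have hsupS : sSup S ∈ S := by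
    by_contra hnot
    have ha : a < sSup S := hsup.1.lt_of_ne fun h => hnot (h ▸ haS)
    obtain ⟨x, hx, hP⟩ := (mem_nhdsLT_iff_exists_Ioo_subset' ha).1 (hleft _ ⟨ha, hsup.2⟩)
    obtain ⟨y, hy, hxy⟩ := exists_lt_of_lt_csSup ⟨a, haS⟩ hx
    have hylt : y < sSup S := (le_csSup hbdd hy).lt_of_ne fun h => hnot (h ▸ hy)
    exact hnot ⟨hsup, hy.2.tail ⟨hylt, hP ⟨hxy, hylt⟩⟩⟩
  obtain hlt | heq := hsup.2.lt_or_eq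
  · obtain ⟨y, hP, hy⟩ := ((hright _ ⟨hsup.1, hlt⟩).and_eventually (Ioo_mem_nhdsGT hlt)).exists
    have hyS : y ∈ S := ⟨⟨hsup.1.trans hy.1.le, hy.2.le⟩, hsupS.2.tail ⟨hy.1, hP⟩⟩
    exact absurd (le_csSup hbdd hyS) hy.1.not_ge
  · exact heq ▸ hsupS.2

theorem exists_nat_chain_of_reflTransGen {X : Type*} {r : X → X → Prop} {x y : X}
    (h : Relation.ReflTransGen r x y) :
    ∃ (n : ℕ) (τ : ℕ → X), τ 0 = x ∧ τ n = y ∧ ∀ i < n, r (τ i) (τ (i + 1)) := by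
  induction h using Relation.ReflTransGen.head_induction_on with
  | refl => exact ⟨0, fun _ => y, rfl, rfl, by simp⟩
  | @head x z hxz _ ih =>
    obtain ⟨n, τ, rfl, hn, hτ⟩ := ih
    refine ⟨n + 1, fun i => Nat.casesOn i x τ, rfl, hn, fun i hi => ?_⟩
    cases i with
    | zero => exact hxz
    | succ i => exact hτ i (Nat.lt_of_succ_lt_succ hi)

end OneSided

section Extremal

/-- `u` is almost everywhere equal to `1`, to `-1` (bang arcs) or to `0` (singular arc) on
`[x, y]`. -/
def IsArcOn (u : ℝ → ℝ) (x y : ℝ) : Prop :=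
  ∃ c : ℝ, (c = 1 ∨ c = -1 ∨ c = 0) ∧ ∀ᵐ t ∂volume.restrict (Set.Icc x y), u t = c

theorem isArcOn_of_ae_mem_Ioo {u : ℝ → ℝ} {x y c : ℝ} (hc : c = 1 ∨ c = -1 ∨ c = 0)
    (h : ∀ᵐ t, t ∈ Set.Ioo x y → u t = c) : IsArcOn u x y := by
  refine ⟨c, hc, ?_⟩
  rw [← restrict_Ioo_eq_restrict_Icc]
  exact (ae_restrict_iff' measurableSet_Ioo).2 h

/-- The Pontryagin system on `so(3)`, written in the coordinates of the covector dual to a basis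
`E₁`, `E₂`, `[E₁, E₂]`, for the drift `c E₁`, the controlled direction `s E₂` and a nontrivial
covector. The control maximises the switching function `s m₂` over `[-1, 1]`. -/
structure IsExtremal (c s : ℝ) (m₁ m₂ m₃ u : ℝ → ℝ) (a b : ℝ) : Prop where
  abs_le_one : ∀ t ∈ Set.uIcc a b, |u t| ≤ 1
  hasACDerivOn₁ : HasACDerivOn m₁ (fun t => -(s * u t * m₃ t)) a b
  hasACDerivOn₂ : HasACDerivOn m₂ (fun t => c * m₃ t) a b
  hasACDerivOn₃ : HasACDerivOn m₃ (fun t => s * u t * m₁ t - c * m₂ t) a b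
  maximality : ∀ᵐ t, t ∈ Set.uIcc a b → u t * (s * m₂ t) = |s * m₂ t|
  nontrivial : m₁ a ≠ 0 ∨ m₂ a ≠ 0 ∨ m₃ a ≠ 0

namespace IsExtremal

variable {c s : ℝ} {m₁ m₂ m₃ u : ℝ → ℝ} {a b : ℝ}

theorem sq_add_sq_add_sq_eq (h : IsExtremal c s m₁ m₂ m₃ u a b) {x y : ℝ}
    (hx : x ∈ Set.uIcc a b) (hy : y ∈ Set.uIcc a b) :
    m₁ x ^ 2 + m₂ x ^ 2 + m₃ x ^ 2 = m₁ y ^ 2 + m₂ y ^ 2 + m₃ y ^ 2 := by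
  have hsum := ((h.hasACDerivOn₁.mul h.hasACDerivOn₁).add (h.hasACDerivOn₂.mul h.hasACDerivOn₂)).add
    (h.hasACDerivOn₃.mul h.hasACDerivOn₃)
  simpa only [sq] using hsum.eq_of_deriv_eq_zero (fun t _ => by ring) x hx y hy

theorem fst_ne_zero (h : IsExtremal c s m₁ m₂ m₃ u a b) {t : ℝ} (ht : t ∈ Set.uIcc a b)
    (h₂ : m₂ t = 0) (h₃ : m₃ t = 0) : m₁ t ≠ 0 := by
  intro h₁
  have hsum := h.sq_add_sq_add_sq_eq Set.left_mem_uIcc ht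
  rw [h₁, h₂, h₃] at hsum
  rcases h.nontrivial with hne | hne | hne <;> have := sq_pos_of_ne_zero hne <;>
    nlinarith [sq_nonneg (m₁ a), sq_nonneg (m₂ a), sq_nonneg (m₃ a)]

-- By maximality `y ↦ c m₁ y + |s m₂ y| - (c m₁ y + u t · s m₂ y)` has a minimum at almost every
-- `t`, and the subtracted function has derivative zero at `t`.
theorem hamiltonian_eq (h : IsExtremal c s m₁ m₂ m₃ u a b) {x y : ℝ}
    (hx : x ∈ Set.uIcc a b) (hy : y ∈ Set.uIcc a b) :
    c * m₁ x + |s * m₂ x| = c * m₁ y + |s * m₂ y| := by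
  have hH : AbsolutelyContinuousOnInterval (fun t => c * m₁ t + |s * m₂ t|) a b :=
    (h.hasACDerivOn₁.ac.const_mul c).fun_add <|
      absolutelyContinuousOnInterval_of_dist_le 1 (h.hasACDerivOn₂.ac.const_mul s) fun _ _ _ _ =>
        (abs_abs_sub_abs_le _ _).trans_eq (one_mul _).symm
  suffices hderiv : ∀ᵐ t, t ∈ Set.uIcc a b →
      HasDerivAt (fun t => c * m₁ t + |s * m₂ t|) 0 t by
    obtain ⟨C, hC⟩ := hH.const_of_ae_hasDerivAt_zero hderiv
    exact (hC x hx).trans (hC y hy).symm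
  filter_upwards [hH.ae_differentiableAt, h.hasACDerivOn₁.ae_hasDerivAt,
    h.hasACDerivOn₂.ae_hasDerivAt, h.maximality] with t hHt h₁ h₂ hmax ht
  have hlin : HasDerivAt (fun y => c * m₁ y + u t * (s * m₂ y)) 0 t := by
    convert! ((h₁ ht).const_mul c).add (((h₂ ht).const_mul s).const_mul (u t)) using 1
    ring
  have hdiff := (hHt ht).hasDerivAt.sub hlin
  have hmin : IsLocalMin ((fun y => c * m₁ y + |s * m₂ y|) -
      fun y => c * m₁ y + u t * (s * m₂ y)) t := by
    refine Eventually.of_forall fun y => ?_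
    have hle : u t * (s * m₂ y) ≤ |s * m₂ y| := (le_abs_self _).trans <| by
      rw [abs_mul]
      exact mul_le_of_le_one_left (abs_nonneg _) (h.abs_le_one t ht)
    simpa [hmax ht] using hle
  have hzero := hmin.hasDerivAt_eq_zero hdiff
  rw [sub_zero] at hzero
  exact hzero ▸ (hHt ht).hasDerivAt

theorem hasDerivAt_snd (h : IsExtremal c s m₁ m₂ m₃ u a b) {t : ℝ} (ht : t ∈ Set.uIoo a b) :
    HasDerivAt m₂ (c * m₃ t) t :=
  h.hasACDerivOn₂.hasDerivAt_of_continuousOn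
    (continuousOn_const.mul h.hasACDerivOn₃.ac.continuousOn) ht

theorem isArcOn_of_ne_zero (h : IsExtremal c s m₁ m₂ m₃ u a b) (hs : s ≠ 0) {x y : ℝ}
    (hxy : Set.Ioo x y ⊆ Set.uIcc a b) (hne : ∀ t ∈ Set.Ioo x y, m₂ t ≠ 0) : IsArcOn u x y := by
  have hcont : ContinuousOn (fun t => s * m₂ t) (Set.Ioo x y) :=
    continuousOn_const.mul (h.hasACDerivOn₂.ac.continuousOn.mono hxy)
  have hne' (t : ℝ) (ht : t ∈ Set.Ioo x y) : s * m₂ t ≠ 0 := mul_ne_zero hs (hne t ht)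
  have hsign : (∀ t ∈ Set.Ioo x y, 0 < s * m₂ t) ∨ ∀ t ∈ Set.Ioo x y, s * m₂ t < 0 := by
    by_contra! ⟨⟨t, ht, hmt⟩, w, hw, hmw⟩
    obtain ⟨v, hv, hmv⟩ := isPreconnected_Ioo.intermediate_value ht hw hcont ⟨hmt, hmw⟩
    exact hne' v hv hmv
  rcases hsign with hpos | hneg
  · refine isArcOn_of_ae_mem_Ioo (c := 1) (by simp) (h.maximality.mono fun t hmax ht => ?_)
    exact mul_right_cancel₀ (hne' t ht) (by rw [hmax (hxy ht), abs_of_pos (hpos t ht), one_mul])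
  · refine isArcOn_of_ae_mem_Ioo (c := -1) (by simp) (h.maximality.mono fun t hmax ht => ?_)
    exact mul_right_cancel₀ (hne' t ht) (by rw [hmax (hxy ht), abs_of_neg (hneg t ht), neg_one_mul])

theorem isArcOn_of_eq_zero (h : IsExtremal c s m₁ m₂ m₃ u a b) (hc : c ≠ 0) (hs : s ≠ 0) {x y : ℝ}
    (hxy : Set.Ioo x y ⊆ Set.uIoo a b) (hzero : ∀ t ∈ Set.Ioo x y, m₂ t = 0) :
    IsArcOn u x y := by
  have deriv_eq_zero {g : ℝ → ℝ} {g' t : ℝ} (hg : ∀ t ∈ Set.Ioo x y, g t = 0)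
      (ht : t ∈ Set.Ioo x y) (hg' : HasDerivAt g g' t) : g' = 0 :=
    hg'.unique ((hasDerivAt_const t (0 : ℝ)).congr_of_eventuallyEq
      (by filter_upwards [Ioo_mem_nhds ht.1 ht.2] using hg))
  have hzero₃ (t : ℝ) (ht : t ∈ Set.Ioo x y) : m₃ t = 0 :=
    (mul_eq_zero.1 (deriv_eq_zero hzero ht (h.hasDerivAt_snd (hxy ht)))).resolve_left hc
  refine isArcOn_of_ae_mem_Ioo (c := 0) (by simp) (h.hasACDerivOn₃.ae_hasDerivAt.mono ?_)
  intro t hderiv ht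
  have htI := Set.uIoo_subset_uIcc_self (hxy ht)
  have h₁ := h.fst_ne_zero htI (hzero t ht) (hzero₃ t ht)
  simpa [hzero t ht, h₁, hs] using deriv_eq_zero hzero₃ ht (hderiv htI)

-- If `m₃ x = 0`, the two conservation laws leave for `y = |s m₂ x|` only `y = 0` and
-- `y = 2 c s² m₁ t / (s² + c²)`, and the latter is bounded away from `0`.
theorem eventually_trd_ne_zero_of_eq_zero (h : IsExtremal c s m₁ m₂ m₃ u a b) (hc : c ≠ 0)
    (hs : s ≠ 0) {t : ℝ} (ht : t ∈ Set.uIcc a b) (h₂ : m₂ t = 0) (h₃ : m₃ t = 0) :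
    ∀ᶠ x in 𝓝[Set.uIcc a b] t, m₂ x ≠ 0 → m₃ x ≠ 0 := by
  have hfar : ∀ᶠ x in 𝓝[Set.uIcc a b] t, (s ^ 2 + c ^ 2) * |s * m₂ x| ≠ 2 * c * s ^ 2 * m₁ t := by
    have hcont : ContinuousWithinAt (fun x => (s ^ 2 + c ^ 2) * |s * m₂ x|) (Set.uIcc a b) t :=
      ((h.hasACDerivOn₂.ac.continuousOn t ht).const_mul s).abs.const_mul _
    refine hcont.eventually_ne ?_
    simp [h₂, hc, hs, h.fst_ne_zero ht h₂ h₃]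
  filter_upwards [hfar, self_mem_nhdsWithin] with x hx hxI hne h₃x
  have hnorm := h.sq_add_sq_add_sq_eq hxI ht
  have hham := h.hamiltonian_eq hxI ht
  simp only [h₂, h₃, h₃x, mul_zero, abs_zero, add_zero, ne_eq, OfNat.ofNat_ne_zero,
    not_false_eq_true, zero_pow] at hnorm hham
  have hsq : |s * m₂ x| ^ 2 = s ^ 2 * m₂ x ^ 2 := by rw [sq_abs, mul_pow]
  refine hx (mul_right_cancel₀ (abs_ne_zero.2 (mul_ne_zero hs hne)) ?_)
  have hm₁ : c * m₁ x = c * m₁ t - |s * m₂ x| := by linarith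
  linear_combination c ^ 2 * hsq + c ^ 2 * s ^ 2 * hnorm -
    s ^ 2 * (c * m₁ x + c * m₁ t - |s * m₂ x|) * hm₁

theorem eventually_trd_ne_zero (h : IsExtremal c s m₁ m₂ m₃ u a b) (hc : c ≠ 0)
    (hs : s ≠ 0) {t : ℝ} (ht : t ∈ Set.uIcc a b) (h₂ : m₂ t = 0) :
    ∀ᶠ x in 𝓝[Set.uIcc a b] t, m₂ x ≠ 0 → m₃ x ≠ 0 := by
  by_cases h₃ : m₃ t = 0
  · exact h.eventually_trd_ne_zero_of_eq_zero hc hs ht h₂ h₃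
  · exact ((h.hasACDerivOn₃.ac.continuousOn t ht).eventually_ne h₃).mono fun _ hx _ => hx

theorem eventually_eq_zero_on_uIcc (h : IsExtremal c s m₁ m₂ m₃ u a b) (hc : c ≠ 0)
    (hs : s ≠ 0) {t : ℝ} (ht : t ∈ Set.uIcc a b) :
    ∀ᶠ x in 𝓝[Set.uIcc a b] t, m₂ x = 0 → ∀ y ∈ Set.uIcc t x, m₂ y = 0 := by
  have hcont := h.hasACDerivOn₂.ac.continuousOn
  by_cases h₂ : m₂ t = 0
  · have hbetween : ∀ᶠ x in 𝓝[Set.uIcc a b] t, ∀ y ∈ Set.uIcc t x, m₂ y ≠ 0 → m₃ y ≠ 0 :=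
      ((tendsto_const_pure.mono_right (pure_le_nhdsWithin ht)).uIcc tendsto_id).eventually
        (h.eventually_trd_ne_zero hc hs ht h₂).smallSets
    filter_upwards [hbetween, self_mem_nhdsWithin] with x hx hxI h₂x
    have hsub : Set.uIcc t x ⊆ Set.uIcc a b := Set.uIcc_subset_uIcc ht hxI
    have hsub' : Set.uIoo t x ⊆ Set.uIoo a b := Set.uIoo_subset_Ioo ht hxI
    exact eq_zero_of_hasDerivAt_ne_zero (hcont.mono hsub) (fun z hz => h.hasDerivAt_snd (hsub' hz))
      h₂ h₂x fun z hz h₂z => mul_ne_zero hc (hx z (Set.uIoo_subset_uIcc_self hz) h₂z)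
  · exact ((hcont t ht).eventually_ne h₂).mono fun x hx h₂x => absurd h₂x hx

theorem eventually_isArcOn_nhdsGT (h : IsExtremal c s m₁ m₂ m₃ u a b) (hab : a ≤ b) (hc : c ≠ 0)
    (hs : s ≠ 0) {t : ℝ} (ht : t ∈ Set.Ico a b) : ∀ᶠ x in 𝓝[>] t, IsArcOn u t x := by
  have hI : Set.Icc t b ⊆ Set.uIcc a b := Set.uIcc_of_le hab ▸ Set.Icc_subset_Icc_left ht.1
  have hdich : ∀ᶠ x in 𝓝[>] t, m₂ x = 0 → ∀ y ∈ Set.Ioo t x, m₂ y = 0 := by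
    have hle : 𝓝[>] t ≤ 𝓝[Set.uIcc a b] t :=
      nhdsWithin_le_of_mem (mem_of_superset (Icc_mem_nhdsGT ht.2) hI)
    filter_upwards [hle (h.eventually_eq_zero_on_uIcc hc hs (hI (Set.left_mem_Icc.2 ht.2.le)))]
      with x hx hx₀ y hy
    exact hx hx₀ y (Set.Icc_subset_uIcc (Set.Ioo_subset_Icc_self hy))
  have hsub {x : ℝ} (hx : x ∈ Set.Ioo t b) : Set.Ioo t x ⊆ Set.uIoo a b :=
    Set.uIoo_of_le hab ▸ Set.Ioo_subset_Ioo ht.1 hx.2.le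
  rcases eventually_nhdsGT_forall_Ioo_or_eventually_forall_Ioo_not hdich with hzero | hne
  · filter_upwards [hzero, Ioo_mem_nhdsGT ht.2] with x hx hxb
    exact h.isArcOn_of_eq_zero hc hs (hsub hxb) hx
  · filter_upwards [hne, Ioo_mem_nhdsGT ht.2] with x hx hxb
    exact h.isArcOn_of_ne_zero hs ((hsub hxb).trans Set.uIoo_subset_uIcc_self) hx

theorem eventually_isArcOn_nhdsLT (h : IsExtremal c s m₁ m₂ m₃ u a b) (hab : a ≤ b) (hc : c ≠ 0)
    (hs : s ≠ 0) {t : ℝ} (ht : t ∈ Set.Ioc a b) : ∀ᶠ x in 𝓝[<] t, IsArcOn u x t := by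
  have hI : Set.Icc a t ⊆ Set.uIcc a b := Set.uIcc_of_le hab ▸ Set.Icc_subset_Icc_right ht.2
  have hdich : ∀ᶠ x in 𝓝[<] t, m₂ x = 0 → ∀ y ∈ Set.Ioo x t, m₂ y = 0 := by
    have hle : 𝓝[<] t ≤ 𝓝[Set.uIcc a b] t :=
      nhdsWithin_le_of_mem (mem_of_superset (Icc_mem_nhdsLT ht.1) hI)
    filter_upwards [hle (h.eventually_eq_zero_on_uIcc hc hs (hI (Set.right_mem_Icc.2 ht.1.le)))]
      with x hx hx₀ y hy
    exact hx hx₀ y (Set.Icc_subset_uIcc' (Set.Ioo_subset_Icc_self hy))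
  have hsub {x : ℝ} (hx : x ∈ Set.Ioo a t) : Set.Ioo x t ⊆ Set.uIoo a b :=
    Set.uIoo_of_le hab ▸ Set.Ioo_subset_Ioo hx.1.le ht.2
  rcases eventually_nhdsLT_forall_Ioo_or_eventually_forall_Ioo_not hdich with hzero | hne
  · filter_upwards [hzero, Ioo_mem_nhdsLT ht.1] with x hx hxa
    exact h.isArcOn_of_eq_zero hc hs (hsub hxa) hx
  · filter_upwards [hne, Ioo_mem_nhdsLT ht.1] with x hx hxa
    exact h.isArcOn_of_ne_zero hs ((hsub hxa).trans Set.uIoo_subset_uIcc_self) hx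

theorem exists_finite_concatenation (h : IsExtremal c s m₁ m₂ m₃ u a b) (hab : a ≤ b) (hc : c ≠ 0)
    (hs : s ≠ 0) :
    ∃ (n : ℕ) (τ : ℕ → ℝ), τ 0 = a ∧ τ n = b ∧ (∀ i < n, τ i < τ (i + 1)) ∧
      ∀ i < n, IsArcOn u (τ i) (τ (i + 1)) := by
  obtain ⟨n, τ, h₀, hn, hτ⟩ := exists_nat_chain_of_reflTransGen <|
    reflTransGen_of_eventually_nhdsLT_of_frequently_nhdsGT hab
      (fun t ht => (h.eventually_isArcOn_nhdsGT hab hc hs ht).frequently)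
      fun t ht => h.eventually_isArcOn_nhdsLT hab hc hs ht
  exact ⟨n, τ, h₀, hn, fun i hi => (hτ i hi).1, fun i hi => (hτ i hi).2⟩

end IsExtremal

end Extremal

section Volterra

open scoped BoundedContinuousFunction

variable {A : Type*} [NormedRing A]

theorem integrable_boundedContinuousFunction_mul (Y : ℝ →ᵇ A) {B : ℝ → A} (hB : Integrable B) :
    Integrable (fun s => Y s * B s) :=
  hB.bdd_mul Y.continuous.aestronglyMeasurable (Eventually.of_forall Y.norm_coe_le_norm)

variable [NormedAlgebra ℝ A]

theorem norm_integral_boundedContinuousFunction_mul_le (Y : ℝ →ᵇ A) {B : ℝ → A}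
    (hB : Integrable B) (a t : ℝ) :
    ‖∫ s in a..t, Y s * B s‖ ≤ (∫ s, ‖B s‖) * ‖Y‖ := by
  have hint := (integrable_boundedContinuousFunction_mul Y hB).norm
  calc ‖∫ s in a..t, Y s * B s‖ ≤ ∫ s in Set.uIoc a t, ‖Y s * B s‖ :=
        norm_integral_le_integral_norm_uIoc
    _ ≤ ∫ s, ‖Y s * B s‖ :=
        setIntegral_le_integral hint (Eventually.of_forall fun s => norm_nonneg _)
    _ ≤ ∫ s, ‖B s‖ * ‖Y‖ := by
        refine integral_mono hint (hB.norm.mul_const _) fun s => ?_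
        rw [mul_comm ‖B s‖]
        exact (norm_mul_le _ _).trans (by gcongr; exact Y.norm_coe_le_norm s)
    _ = (∫ s, ‖B s‖) * ‖Y‖ := integral_mul_const _ _

/-- The Volterra operator `Y ↦ (t ↦ ∫ s in a..t, Y s * B s)`. A solution of `Y' = Y * B`, `Y a = 1`
is a solution of the fixed point equation `Y = 1 + volterra a B Y`. -/
noncomputable def volterra (a : ℝ) (B : ℝ → A) (hB : Integrable B) : (ℝ →ᵇ A) →L[ℝ] (ℝ →ᵇ A) :=
  LinearMap.mkContinuous
    { toFun := fun Y => BoundedContinuousFunction.ofNormedAddCommGroup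
        (fun t => ∫ s in a..t, Y s * B s)
        (continuous_primitive
          (fun _ _ => (integrable_boundedContinuousFunction_mul Y hB).intervalIntegrable) a)
        ((∫ s, ‖B s‖) * ‖Y‖) (norm_integral_boundedContinuousFunction_mul_le Y hB a)
      map_add' := fun Y Z => by
        ext t
        simp only [BoundedContinuousFunction.coe_ofNormedAddCommGroup,
          BoundedContinuousFunction.coe_add, Pi.add_apply, add_mul]
        exact integral_add (integrable_boundedContinuousFunction_mul Y hB).intervalIntegrable
          (integrable_boundedContinuousFunction_mul Z hB).intervalIntegrable
      map_smul' := fun r Y => by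
        ext t
        simp only [BoundedContinuousFunction.coe_ofNormedAddCommGroup,
          BoundedContinuousFunction.coe_smul, smul_mul_assoc, RingHom.id_apply]
        exact integral_smul _ _ }
    (∫ s, ‖B s‖) fun Y => (BoundedContinuousFunction.norm_le (by positivity)).2
      (norm_integral_boundedContinuousFunction_mul_le Y hB a)

theorem volterra_apply (a : ℝ) {B : ℝ → A} (hB : Integrable B) (Y : ℝ →ᵇ A) (t : ℝ) :
    volterra a B hB Y t = ∫ s in a..t, Y s * B s := rfl

theorem linearCombination_volterra_apply {ι : Type*} [Fintype ι] (a : ℝ) {B : ι → ℝ → A}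
    (hB : ∀ j, Integrable (B j)) (μ : ι → ℝ) (Y : ℝ →ᵇ A) (t : ℝ) :
    Fintype.linearCombination ℝ (fun j => volterra a (B j) (hB j)) μ Y t =
      ∫ s in a..t, Y s * ∑ j, μ j • B j s := by
  simp only [Fintype.linearCombination_apply, _root_.sum_apply, BoundedContinuousFunction.coe_sum,
    Finset.sum_apply, _root_.smul_apply, BoundedContinuousFunction.coe_smul, volterra_apply,
    Finset.mul_sum, mul_smul_comm]
  rw [intervalIntegral.integral_finsetSum fun j _ =>
    ((integrable_boundedContinuousFunction_mul Y (hB j)).fun_smul (μ j)).intervalIntegrable]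
  simp only [intervalIntegral.integral_smul]

theorem exists_hasStrictFDerivAt_eq_add_apply_self {E P : Type*} [NormedAddCommGroup E]
    [NormedSpace ℝ E] [CompleteSpace E] [NormedAddCommGroup P] [NormedSpace ℝ P]
    (V : P →L[ℝ] E →L[ℝ] E) (e : E) :
    ∃ Y : P → E, HasStrictFDerivAt Y (V.flip e) 0 ∧ Y 0 = e ∧
      ∀ᶠ μ in 𝓝 (0 : P), Y μ = e + V μ (Y μ) := by
  have hsub : HasStrictFDerivAt (fun μ => 1 - V μ) (-V) 0 :=
    V.hasStrictFDerivAt.const_sub (1 : E →L[ℝ] E)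
  have hinv : HasStrictFDerivAt (fun μ => Ring.inverse (1 - V μ)) V 0 := by
    have hone : HasStrictFDerivAt (Ring.inverse : (E →L[ℝ] E) → _)
        (-ContinuousLinearMap.mulLeftRight ℝ (E →L[ℝ] E) 1 1) (1 - V 0) := by
      simpa using hasStrictFDerivAt_ringInverse (𝕜 := ℝ) (1 : (E →L[ℝ] E)ˣ)
    convert! hone.comp (0 : P) hsub using 1
    ext1 μ
    simp
  have hunit : ∀ᶠ μ in 𝓝 (0 : P), IsUnit (1 - V μ) :=
    hsub.continuousAt.eventually (Units.isOpen.mem_nhds (by simp))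
  refine ⟨fun μ => Ring.inverse (1 - V μ) e,
    (ContinuousLinearMap.apply ℝ E e).hasStrictFDerivAt.comp (0 : P) hinv, by simp, ?_⟩
  filter_upwards [hunit] with μ hμ
  have happly := congrArg (fun L : E →L[ℝ] E => L e) (Ring.mul_inverse_cancel _ hμ)
  exact sub_eq_iff_eq_add.1 happly

theorem exists_hasACDerivOn_mul_linearCombination [CompleteSpace A] {ι : Type*} [Fintype ι]
    {B : ι → ℝ → A} {a b : ℝ} (hB : ∀ j, IntervalIntegrable (B j) volume a b) :
    ∃ Y : (ι → ℝ) → ℝ → A,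
      (∀ᶠ μ in 𝓝 0, Y μ a = 1 ∧
        HasACDerivOn (Y μ) (fun t => Y μ t * ∑ j, μ j • B j t) a b) ∧
      Y 0 b = 1 ∧
      HasStrictFDerivAt (fun μ => Y μ b)
        (Fintype.linearCombination ℝ fun j => ∫ s in a..b, B j s).toContinuousLinearMap 0 := by
  let C (j : ι) : ℝ → A := (Set.uIoc a b).indicator (B j)
  have hC j : Integrable (C j) := (hB j).def'.integrable_indicator measurableSet_uIoc
  have hCB {s : ℝ} (hs : s ∈ Set.uIoc a b) j : C j s = B j s := Set.indicator_of_mem hs _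
  let V := (Fintype.linearCombination ℝ fun j => volterra a (C j) (hC j)).toContinuousLinearMap
  have hV (μ : ι → ℝ) (Y : ℝ →ᵇ A) {t : ℝ} (ht : t ∈ Set.uIcc a b) :
      V μ Y t = ∫ s in a..t, Y s * ∑ j, μ j • B j s := by
    refine (linearCombination_volterra_apply a hC μ Y t).trans ?_
    refine integral_congr_ae (Eventually.of_forall fun s hs => ?_)
    have hs' := Set.uIoc_subset_uIoc_of_uIcc_subset_uIcc (Set.uIcc_subset_uIcc_left ht) hs
    simp only [hCB hs']
  obtain ⟨Y, hderiv, hzero, hfix⟩ := exists_hasStrictFDerivAt_eq_add_apply_self V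
    (BoundedContinuousFunction.const ℝ (1 : A))
  refine ⟨fun μ => Y μ, ?_, by simp [hzero], ?_⟩
  · filter_upwards [hfix] with μ hμ
    have hsol t (ht : t ∈ Set.uIcc a b) : Y μ t = 1 + ∫ s in a..t, Y μ s * ∑ j, μ j • B j s :=
      hV μ (Y μ) ht ▸ congrArg (fun Z : ℝ →ᵇ A => Z t) hμ
    have hinit : Y μ a = 1 := by simpa using hsol a Set.left_mem_uIcc
    have hint : IntervalIntegrable (fun t => ∑ j, μ j • B j t) volume a b := by
      simpa only [Finset.sum_fn] using
        IntervalIntegrable.sum Finset.univ fun j _ => (hB j).continuousOn_smul continuousOn_const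
    exact ⟨hinit, .of_integral (hint.continuousOn_mul (Y μ).continuous.continuousOn)
      (hinit.symm ▸ hsol)⟩
  · convert! (BoundedContinuousFunction.evalCLM ℝ b : (ℝ →ᵇ A) →L[ℝ] A).hasStrictFDerivAt.comp
      (0 : ι → ℝ) hderiv using 1
    ext1 μ
    have hCint j : ∫ s in a..b, C j s = ∫ s in a..b, B j s :=
      integral_congr_ae (Eventually.of_forall fun s hs => hCB hs j)
    simp [V, Fintype.linearCombination_apply, volterra_apply, hCint]

end Volterra

section FiniteDimensional

theorem exists_hasDerivAt_eventually_eq_of_apply_eq_zero {E G : Type*} [NormedAddCommGroup E]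
    [NormedSpace ℝ E] [CompleteSpace E] [NormedAddCommGroup G] [NormedSpace ℝ G]
    [FiniteDimensional ℝ G] {F : E → G} {D : E →L[ℝ] G} {x k : E} (hF : HasStrictFDerivAt F D x)
    (hD : D.range = ⊤) (hk : D k = 0) :
    ∃ φ : ℝ → E, φ 0 = x ∧ HasDerivAt φ k 0 ∧ ∀ᶠ ε in 𝓝 0, F (φ ε) = F x := by
  have := FiniteDimensional.complete ℝ G
  let κ : D.ker := ⟨k, hk⟩
  have hline : HasDerivAt (fun ε : ℝ => ε • κ) κ 0 := by
    simpa using (hasDerivAt_id (0 : ℝ)).smul_const κ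
  refine ⟨fun ε => hF.implicitFunction F D hD (F x) (ε • κ), ?_, ?_, ?_⟩
  · simp [hF.implicitFunction_apply_image hD]
  · have himpl : HasFDerivAt (hF.implicitFunction F D hD (F x)) D.ker.subtypeL ((0 : ℝ) • κ) := by
      simpa using (hF.to_implicitFunction hD).hasFDerivAt
    exact himpl.comp_hasDerivAt (0 : ℝ) hline
  · have hpair : Tendsto (fun ε : ℝ => (F x, ε • κ)) (𝓝 0) (𝓝 (F x, 0)) := by
      simpa using (continuousAt_const.prodMk hline.continuousAt).tendsto
    exact hpair.eventually (hF.map_implicitFunction_eq hD)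

theorem exists_pos_map_eq_of_apply_eq_zero {ι G : Type*} [Finite ι] [NormedAddCommGroup G]
    [NormedSpace ℝ G] [FiniteDimensional ℝ G] {F : (ι → ℝ) → G} {D : (ι → ℝ) →L[ℝ] G}
    (hF : HasStrictFDerivAt F D 0) (hD : D.range = ⊤) {k : ι → ℝ} (hk : D k = 0)
    (hpos : ∀ j, 0 < k j) {U : Set (ι → ℝ)} (hU : U ∈ 𝓝 0) :
    ∃ μ ∈ U, F μ = F 0 ∧ ∀ j, 0 < μ j := by
  cases nonempty_fintype ι
  obtain ⟨φ, hzero, hφ, hmap⟩ := exists_hasDerivAt_eventually_eq_of_apply_eq_zero hF hD hk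
  have hmem : ∀ᶠ ε in 𝓝[>] 0, φ ε ∈ U :=
    hφ.continuousAt.continuousWithinAt.eventually (hzero.symm ▸ hU)
  have hφpos : ∀ᶠ ε in 𝓝[>] 0, ∀ j, 0 < φ ε j := eventually_all.2 fun j => by
    have hsign := eventually_nhdsWithin_sign_eq_of_deriv_pos
      ((hasDerivAt_pi.1 hφ j).deriv.symm ▸ hpos j) (congrFun hzero j)
    filter_upwards [hsign.filter_mono nhdsWithin_le_nhds, self_mem_nhdsWithin] with ε hε hεpos
    rwa [sub_zero, sign_pos (Set.mem_Ioi.1 hεpos), sign_eq_one_iff] at hε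
  obtain ⟨ε, hεU, hεF, hεpos⟩ :=
    (hmem.and ((hmap.filter_mono nhdsWithin_le_nhds).and hφpos)).exists
  exact ⟨φ ε, hεU, hεF, hεpos⟩

theorem exists_ne_zero_forall_nonpos_of_notMem_interior {E : Type*} [NormedAddCommGroup E]
    [NormedSpace ℝ E] [FiniteDimensional ℝ E] {K : Set E} (hK : Convex ℝ K) (hzero : 0 ∈ K)
    (hint : 0 ∉ interior K) : ∃ p : E →L[ℝ] ℝ, p ≠ 0 ∧ ∀ x ∈ K, p x ≤ 0 := by
  by_cases hne : (interior K).Nonempty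
  · obtain ⟨p, hp, hle⟩ := geometric_hahn_banach_of_nonempty_interior_point hK hint hne
    exact ⟨p, hp, fun x hx => by simpa using hle x hx⟩
  · have hspan : Submodule.span ℝ K < ⊤ := by
      refine lt_top_iff_ne_top.2 fun htop => hne (hK.interior_nonempty_iff_affineSpan_eq_top.2 ?_)
      rw [← SetLike.coe_set_eq, ← Set.insert_eq_of_mem hzero, affineSpan_insert_zero, htop]
      rfl
    obtain ⟨p, hp, hker⟩ := Submodule.exists_le_ker_of_lt_top _ hspan
    exact ⟨p.toContinuousLinearMap, by simpa using hp, fun x hx =>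
      (LinearMap.mem_ker.1 (hker (Submodule.subset_span hx))).le⟩

theorem exists_smul_sum_eq_of_mem_nhds_zero {E : Type*} [NormedAddCommGroup E]
    [NormedSpace ℝ E] [FiniteDimensional ℝ E] {K : Set E} (hK : K ∈ 𝓝 0) (v : E) :
    ∃ (n : ℕ) (y : Fin n → E), (∀ j, y j ∈ K) ∧ Submodule.span ℝ (Set.range y) = ⊤ ∧
      ∃ c > 0, (c : ℝ) • ∑ j, y j = v := by
  let b := Module.finBasis ℝ E
  let z : Fin (Module.finrank ℝ E + 1) → E := Fin.cons (v - ∑ j, b j) b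
  have hsmall : ∀ᶠ η in 𝓝[>] (0 : ℝ), ∀ j, η • z j ∈ K := eventually_all.2 fun j => by
    have hcont : Continuous fun η : ℝ => η • z j := by fun_prop
    exact (hcont.tendsto' 0 0 (zero_smul ℝ _)).mono_left nhdsWithin_le_nhds hK
  obtain ⟨η, hηK, hη⟩ := (hsmall.and self_mem_nhdsWithin).exists
  have hη : 0 < η := hη
  refine
    ⟨_, fun j => η • z j, hηK, top_le_iff.1 (b.span_eq.symm.trans_le ?_), η⁻¹, inv_pos.2 hη, ?_⟩
  · rw [Submodule.span_le]
    rintro _ ⟨j, rfl⟩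
    have hmem := Submodule.smul_mem _ η⁻¹ (Submodule.subset_span (Set.mem_range_self j.succ) :
      η • z j.succ ∈ Submodule.span ℝ (Set.range fun j => η • z j))
    rwa [inv_smul_smul₀ hη.ne'] at hmem
  · rw [← Finset.smul_sum, inv_smul_smul₀ hη.ne', Fin.sum_univ_succ]
    simp [z]

end FiniteDimensional

section StarAlgebra

variable {A : Type*} [NormedRing A] [NormedAlgebra ℝ A] [StarRing A] [StarModule ℝ A]
  [ContinuousStar A] {X N : ℝ → A} {a b : ℝ}

theorem hasACDerivOn_conj (hX : HasACDerivOn X (fun t => X t * N t) a b)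
    (hN : ∀ t ∈ Set.uIcc a b, N t ∈ skewAdjoint A) (M : A) :
    HasACDerivOn (fun t => X t * M * star (X t)) (fun t => X t * ⁅N t, M⁆ * star (X t)) a b := by
  have hstar := hX.clm_comp (starL' ℝ : A ≃L[ℝ] A).toContinuousLinearMap
  refine ((hX.mul (.const M a b)).mul hstar).congr_deriv fun t ht => ?_
  change _ + _ * star _ = _
  rw [star_mul, skewAdjoint.mem_iff.1 (hN t ht), Ring.lie_def]
  change _ * star _ + _ = _
  noncomm_ring

theorem mul_star_eq_of_hasACDerivOn (hX : HasACDerivOn X (fun t => X t * N t) a b)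
    (hN : ∀ t ∈ Set.uIcc a b, N t ∈ skewAdjoint A) {t : ℝ} (ht : t ∈ Set.uIcc a b) :
    X t * star (X t) = X a * star (X a) := by
  simpa using (hasACDerivOn_conj hX hN 1).eq_of_deriv_eq_zero (by simp [Ring.lie_def]) t ht a
    Set.left_mem_uIcc

variable (A) in
/-- The projection `S ↦ (S - star S) / 2` onto the skew-adjoint elements. It serves as a chart of
the unitary group around `1`, see `eq_one_of_skewPart_eq_zero`. -/
noncomputable def skewPart : A →L[ℝ] skewAdjoint.submodule ℝ A :=
  skewAdjointPartL ℝ A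

theorem skewPart_coe (S : skewAdjoint.submodule ℝ A) : skewPart A S = S :=
  LinearMap.congr_fun (skewAdjointPart_comp_subtype_skewAdjoint ℝ) S

theorem skewPart_eq_zero_iff {S : A} : skewPart A S = 0 ↔ star S = S := by
  have hcoe : (skewPart A S : A) = (⅟2 : ℝ) • (S - star S) := skewAdjointPart_apply_coe ℝ S
  rw [← Submodule.coe_eq_zero, hcoe, smul_eq_zero_iff_right (by norm_num), sub_eq_zero, eq_comm]

theorem eq_one_of_skewPart_eq_zero {Y : A} (hY : Y * star Y = 1) (hskew : skewPart A Y = 0)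
    (hunit : IsUnit (Y + 1)) : Y = 1 := by
  rw [skewPart_eq_zero_iff.1 hskew] at hY
  refine sub_eq_zero.1 (hunit.mul_left_eq_zero.1 ?_)
  rw [mul_add, sub_mul, hY]
  simp

theorem exists_hasACDerivOn_mul_sum_smul_eq_one [FiniteDimensional ℝ A] {ι : Type*} [Fintype ι]
    {B : ι → ℝ → A} (hB : ∀ j, IntervalIntegrable (B j) volume a b)
    (hskew : ∀ j, ∀ t ∈ Set.uIcc a b, B j t ∈ skewAdjoint A)
    (hspan : Submodule.span ℝ (Set.range fun j => ∫ t in a..b, skewPart A (B j t)) = ⊤)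
    {k : ι → ℝ} (hpos : ∀ j, 0 < k j) (hk : ∑ j, k j • ∫ t in a..b, skewPart A (B j t) = 0)
    {U : Set (ι → ℝ)} (hU : U ∈ 𝓝 0) :
    ∃ μ ∈ U, (∀ j, 0 < μ j) ∧ ∃ Y : ℝ → A, Y a = 1 ∧ Y b = 1 ∧
      HasACDerivOn Y (fun t => Y t * ∑ j, μ j • B j t) a b := by
  have := FiniteDimensional.complete ℝ A
  obtain ⟨Y, hY, hYzero, hYderiv⟩ := exists_hasACDerivOn_mul_linearCombination hB
  have hF : HasStrictFDerivAt (fun μ => skewPart A (Y μ b)) (Fintype.linearCombination ℝ fun j =>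
      ∫ t in a..b, skewPart A (B j t)).toContinuousLinearMap 0 := by
    convert! (skewPart A).hasStrictFDerivAt.comp (0 : ι → ℝ) hYderiv using 1
    ext1 μ
    simp [Fintype.linearCombination_apply, ContinuousLinearMap.intervalIntegral_comp_comm _ (hB _)]
  have hunit : ∀ᶠ μ in 𝓝 0, IsUnit (Y μ b + 1) := by
    refine (hYderiv.continuousAt.add continuousAt_const).eventually (Units.isOpen.mem_nhds ?_)
    change IsUnit (Y 0 b + 1)
    rw [hYzero, one_add_one_eq_two, ← map_ofNat (algebraMap ℝ A)]
    exact (IsUnit.mk0 _ two_ne_zero).map _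
  obtain ⟨μ, ⟨hμU, ⟨hYa, hYac⟩, hYunit⟩, hYskew, hμpos⟩ := exists_pos_map_eq_of_apply_eq_zero hF
    ((Fintype.range_linearCombination ℝ _).trans hspan) hk hpos
    (Filter.inter_mem hU (hY.and hunit))
  have hYorth : Y μ b * star (Y μ b) = 1 := by
    rw [mul_star_eq_of_hasACDerivOn hYac (fun t ht => AddSubgroup.sum_mem _ fun j _ =>
      skewAdjoint.smul_mem _ (hskew j t ht)) Set.right_mem_uIcc, hYa, star_one, mul_one]
  have hYb : skewPart A (Y μ b) = 0 :=
    hYskew.trans (skewPart_eq_zero_iff.2 (by rw [hYzero, star_one]))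
  exact ⟨μ, hμU, hμpos, Y μ, hYa, eq_one_of_skewPart_eq_zero hYorth hYb hYunit, hYac⟩

-- The curve is `Y t * γ t` with `Y` driven by the conjugated variations. As `Y b` is unitary and
-- close to `1`, it equals `1` as soon as its linear coordinates `skewPart A (Y b)` vanish.
theorem exists_hasACDerivOn_add_sum_smul_endpoint_eq [FiniteDimensional ℝ A] {γ : ℝ → A}
    {ι : Type*} [Fintype ι] {C : ι → ℝ → A} (hγ : HasACDerivOn γ (fun t => γ t * N t) a b)
    (hunitary : ∀ t ∈ Set.uIcc a b, γ t ∈ unitary A)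
    (hC : ∀ j, IntervalIntegrable (C j) volume a b)
    (hskew : ∀ j, ∀ t ∈ Set.uIcc a b, C j t ∈ skewAdjoint A)
    (hspan : Submodule.span ℝ (Set.range fun j =>
      ∫ t in a..b, skewPart A (γ t * C j t * star (γ t))) = ⊤) {k : ι → ℝ} (hpos : ∀ j, 0 < k j)
    (hk : ∑ j, k j • ∫ t in a..b, skewPart A (γ t * C j t * star (γ t)) = 0)
    {U : Set (ι → ℝ)} (hU : U ∈ 𝓝 0) :
    ∃ μ ∈ U, (∀ j, 0 < μ j) ∧ ∃ X : ℝ → A, X a = γ a ∧ X b = γ b ∧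
      HasACDerivOn X (fun t => X t * (N t + ∑ j, μ j • C j t)) a b := by
  have hcont := hγ.ac.continuousOn
  obtain ⟨μ, hμU, hμpos, Y, hYa, hYb, hY⟩ := exists_hasACDerivOn_mul_sum_smul_eq_one
    (fun j => ((hC j).continuousOn_mul hcont).mul_continuousOn hcont.star)
    (fun j t ht => skewAdjoint.conjugate (hskew j t ht) _) hspan hpos hk hU
  refine ⟨μ, hμU, hμpos, fun t => Y t * γ t, by simp [hYa], by simp [hYb],
    (hY.mul hγ).congr_deriv fun t ht => ?_⟩
  have hcancel : (∑ j, μ j • (γ t * C j t * star (γ t))) * γ t = γ t * ∑ j, μ j • C j t := by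
    simp only [Finset.sum_mul, Finset.mul_sum, smul_mul_assoc, mul_smul_comm, mul_assoc,
      Unitary.star_mul_self_of_mem (hunitary t ht), mul_one]
  rw [mul_assoc, hcancel]
  noncomm_ring

end StarAlgebra

section ControlSystem

variable {a b : ℝ} {u v : ℝ → ℝ}

theorem intervalIntegrable_smul_of_abs_le {E : Type*} [NormedAddCommGroup E] [NormedSpace ℝ E]
    {G : ℝ → E} {C : ℝ} (hu : Measurable u) (hbound : ∀ t ∈ Set.uIcc a b, |u t| ≤ C)
    (hG : ContinuousOn G (Set.uIcc a b)) :
    IntervalIntegrable (fun t => u t • G t) volume a b := by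
  refine IntervalIntegrable.smul_continuousOn (intervalIntegrable_iff.2 ?_) hG
  exact Measure.integrableOn_of_bounded (by simp [Set.uIoc]) hu.aestronglyMeasurable
    ((ae_restrict_mem measurableSet_uIoc).mono fun t ht => hbound t (Set.uIoc_subset_uIcc ht))

section Variations

variable {E : Type*} [NormedAddCommGroup E] [NormedSpace ℝ E] {G : ℝ → E}

/-- First order variations of the end point under the admissible changes of a control `u`, when
changing the control at time `t` by `δ` has the effect `δ • G t`. -/
def endpointVariations (G : ℝ → E) (u : ℝ → ℝ) (a b : ℝ) : Set E :=
  {y | ∃ v : ℝ → ℝ, Measurable v ∧ (∀ t ∈ Set.uIcc a b, |v t| ≤ 1) ∧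
    ∫ t in a..b, (v t - u t) • G t = y}

theorem intervalIntegrable_sub_smul_of_abs_le (hu : Measurable u)
    (hubound : ∀ t ∈ Set.uIcc a b, |u t| ≤ 1) (hv : Measurable v)
    (hvbound : ∀ t ∈ Set.uIcc a b, |v t| ≤ 1) (hG : ContinuousOn G (Set.uIcc a b)) :
    IntervalIntegrable (fun t => (v t - u t) • G t) volume a b :=
  intervalIntegrable_smul_of_abs_le (hv.sub hu)
    (fun t ht => (abs_sub _ _).trans (add_le_add (hvbound t ht) (hubound t ht))) hG

theorem zero_mem_endpointVariations (hu : Measurable u) (hbound : ∀ t ∈ Set.uIcc a b, |u t| ≤ 1) :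
    0 ∈ endpointVariations G u a b :=
  ⟨u, hu, hbound, by simp⟩

theorem convex_endpointVariations (hu : Measurable u) (hbound : ∀ t ∈ Set.uIcc a b, |u t| ≤ 1)
    (hG : ContinuousOn G (Set.uIcc a b)) : Convex ℝ (endpointVariations G u a b) := by
  rintro _ ⟨v, hv, hvbound, rfl⟩ _ ⟨w, hw, hwbound, rfl⟩ x y hx hy hxy
  refine ⟨fun t => x * v t + y * w t, (hv.const_mul x).add (hw.const_mul y), fun t ht => ?_, ?_⟩
  · simpa using convex_closedBall (0 : ℝ) 1 (by simpa using hvbound t ht)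
      (by simpa using hwbound t ht) hx hy hxy
  · simp only [← intervalIntegral.integral_smul]
    refine Eq.trans ?_ (integral_add
      ((intervalIntegrable_sub_smul_of_abs_le hu hbound hv hvbound hG).smul x)
      ((intervalIntegrable_sub_smul_of_abs_le hu hbound hw hwbound hG).smul y))
    obtain rfl : y = 1 - x := by linarith
    congr 1 with t
    module

theorem ae_mul_eq_abs_of_integral_le (hab : a ≤ b) {H : ℝ → ℝ} (hu : Measurable u)
    (hbound : ∀ t ∈ Set.uIcc a b, |u t| ≤ 1) (hH : ContinuousOn H (Set.uIcc a b))
    (hle : ∀ v : ℝ → ℝ, Measurable v → (∀ t ∈ Set.uIcc a b, |v t| ≤ 1) →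
      ∫ t in a..b, (v t - u t) * H t ≤ 0) :
    ∀ᵐ t, t ∈ Set.uIcc a b → u t * H t = |H t| := by
  classical
  set Z : Set ℝ := Set.uIcc a b ∩ H ⁻¹' Set.Ici 0
  have hZ : MeasurableSet Z :=
    (hH.preimage_isClosed_of_isClosed isClosed_Icc isClosed_Ici).measurableSet
  set v : ℝ → ℝ := fun t => if t ∈ Z then 1 else -1 with hvdef
  have hv : Measurable v := Measurable.ite hZ measurable_const measurable_const
  have hvbound : ∀ t, |v t| ≤ 1 := fun t => by simp only [hvdef]; split_ifs <;> simp
  have hvH : ∀ t ∈ Set.uIcc a b, v t * H t = |H t| := fun t ht => by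
    simp only [hvdef]
    split_ifs with hz
    · rw [abs_of_nonneg hz.2, one_mul]
    · rw [abs_of_neg (not_le.1 fun hpos => hz ⟨ht, hpos⟩), neg_one_mul]
  have hnonneg : ∀ t ∈ Set.uIcc a b, 0 ≤ (v t - u t) * H t := fun t ht => by
    rw [sub_mul, hvH t ht, sub_nonneg]
    calc u t * H t ≤ |u t| * |H t| := (le_abs_self _).trans (abs_mul _ _).le
      _ ≤ |H t| := mul_le_of_le_one_left (abs_nonneg _) (hbound t ht)
  have hzero : ∫ t in a..b, (v t - u t) * H t = 0 := (hle v hv fun t _ => hvbound t).antisymm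
    (integral_nonneg hab fun t ht => hnonneg t (Set.Icc_subset_uIcc ht))
  rw [integral_eq_zero_iff_of_le_of_nonneg_ae hab ((ae_restrict_mem measurableSet_Ioc).mono
    fun t ht => hnonneg t (Set.Icc_subset_uIcc (Set.Ioc_subset_Icc_self ht)))
    (intervalIntegrable_sub_smul_of_abs_le hu hbound hv (fun t _ => hvbound t) hH),
    EventuallyEq, ← Measure.restrict_congr_set Ioc_ae_eq_Icc.symm,
    ae_restrict_iff' measurableSet_Icc, ← Set.uIcc_of_le hab] at hzero
  filter_upwards [hzero] with t hzt ht
  rw [← hvH t ht, eq_comm, ← sub_eq_zero, ← sub_mul]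
  exact hzt ht

theorem ae_mul_apply_eq_abs_of_endpointVariations_nonpos [CompleteSpace E] (hab : a ≤ b)
    (hu : Measurable u) (hbound : ∀ t ∈ Set.uIcc a b, |u t| ≤ 1)
    (hG : ContinuousOn G (Set.uIcc a b)) {p : E →L[ℝ] ℝ}
    (hp : ∀ y ∈ endpointVariations G u a b, p y ≤ 0) :
    ∀ᵐ t, t ∈ Set.uIcc a b → u t * p (G t) = |p (G t)| := by
  refine ae_mul_eq_abs_of_integral_le hab hu hbound (p.continuous.comp_continuousOn hG)
    fun v hv hvbound => ?_
  have hle := hp _ ⟨v, hv, hvbound, rfl⟩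
  rw [← p.intervalIntegral_comp_comm
    (intervalIntegrable_sub_smul_of_abs_le hu hbound hv hvbound hG)] at hle
  simpa using hle

end Variations

section SlowerDrift

variable {A : Type*} [NormedRing A] [NormedAlgebra ℝ A] [StarRing A] [StarModule ℝ A]
  [ContinuousStar A] {f g : A} {γ : ℝ → A}

theorem abs_add_sum_mul_le {ι : Type*} [Fintype ι] {k : ι → ℝ} (hk : ∀ j, 0 ≤ k j) {θ x : ℝ}
    (hle : ∑ j, k j ≤ θ) (hx : |x| ≤ 1) {y : ι → ℝ} (hy : ∀ j, |y j| ≤ 1) :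
    |(θ - ∑ j, k j) * x + ∑ j, k j * y j| ≤ θ :=
  calc |(θ - ∑ j, k j) * x + ∑ j, k j * y j|
      ≤ |(θ - ∑ j, k j) * x| + ∑ j, |k j * y j| :=
        (abs_add_le _ _).trans (add_le_add_right (Finset.abs_sum_le_sum_abs _ _) _)
    _ ≤ (θ - ∑ j, k j) + ∑ j, k j := by
        simp only [abs_mul, abs_of_nonneg (sub_nonneg.2 hle), abs_of_nonneg (hk _)]
        exact add_le_add (mul_le_of_le_one_right (sub_nonneg.2 hle) hx)
          (Finset.sum_le_sum fun j _ => mul_le_of_le_one_right (hk j) (hy j))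
    _ = θ := by ring

/-- Besides changing the control, the generator is varied by `-(f + u • g)`, which slows the motion
down; the hypothesis `hsum` says that changes of the control compensate for this delay. -/
theorem exists_hasACDerivOn_smul_drift_of_span_eq_top [FiniteDimensional ℝ A]
    (hf : f ∈ skewAdjoint A) (hg : g ∈ skewAdjoint A) (hu : Measurable u)
    (hbound : ∀ t ∈ Set.uIcc a b, |u t| ≤ 1)
    (hγ : HasACDerivOn γ (fun t => γ t * (f + u t • g)) a b)
    (hunitary : ∀ t ∈ Set.uIcc a b, γ t ∈ unitary A) {ι : Type*} [Fintype ι] {v : ι → ℝ → ℝ}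
    (hv : ∀ i, Measurable (v i)) (hvbound : ∀ i, ∀ t ∈ Set.uIcc a b, |v i t| ≤ 1)
    (hspan : Submodule.span ℝ (Set.range fun i =>
      ∫ t in a..b, (v i t - u t) • skewPart A (γ t * g * star (γ t))) = ⊤) {c : ℝ} (hc : 0 < c)
    (hsum : c • ∑ i, ∫ t in a..b, (v i t - u t) • skewPart A (γ t * g * star (γ t)) =
      ∫ t in a..b, skewPart A (γ t * (f + u t • g) * star (γ t))) :
    ∃ η > 0, ∃ k : ι → ℝ, (∀ i, 0 < k i) ∧ η + ∑ i, k i < 1 ∧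
      ∃ X : ℝ → A, X a = γ a ∧ X b = γ b ∧ HasACDerivOn X (fun t => X t * ((1 - η) • f +
        ((1 - η - ∑ i, k i) * u t + ∑ i, k i * v i t) • g)) a b := by
  let C : Option ι → ℝ → A := fun j t => j.elim (-(f + u t • g)) fun i => (v i t - u t) • g
  have hdelay : ∀ t, skewPart A (γ t * C none t * star (γ t)) =
      -skewPart A (γ t * (f + u t • g) * star (γ t)) := fun t => by
    simp only [C, Option.elim, mul_neg, neg_mul, map_neg]
  have hcontrol : ∀ i t, skewPart A (γ t * C (some i) t * star (γ t)) =
      (v i t - u t) • skewPart A (γ t * g * star (γ t)) := fun i t => by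
    simp only [C, Option.elim, mul_smul_comm, smul_mul_assoc, map_smul]
  obtain ⟨μ, hμ, hμpos, X, hXa, hXb, hX⟩ := exists_hasACDerivOn_add_sum_smul_endpoint_eq
    (C := C) (k := fun j => j.elim 1 fun _ => c) (U := {μ | ∑ j, μ j < 1}) hγ hunitary
    (Option.rec (intervalIntegrable_const.add
        (intervalIntegrable_smul_of_abs_le hu hbound continuousOn_const)).neg
      fun i => intervalIntegrable_sub_smul_of_abs_le hu hbound (hv i) (hvbound i)
        continuousOn_const)
    (Option.rec (fun t _ => neg_mem (add_mem hf (skewAdjoint.smul_mem _ hg)))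
      fun i t _ => skewAdjoint.smul_mem _ hg)
    (top_unique (hspan.ge.trans (Submodule.span_mono (Set.range_subset_iff.2 fun i =>
      ⟨some i, by simp only [hcontrol]⟩))))
    (Option.rec one_pos fun _ => hc)
    (by simp [Fintype.sum_option, hcontrol, hdelay, ← Finset.smul_sum, hsum])
    ((continuous_finsetSum _ fun j _ => continuous_apply j).continuousAt.eventually_lt
      continuousAt_const (by simp))
  refine ⟨μ none, hμpos none, fun i => μ (some i), fun i => hμpos _,
    (Fintype.sum_option μ).ge.trans_lt hμ, X, hXa, hXb, hX.congr_deriv fun t _ => ?_⟩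
  simp only [Fintype.sum_option, C, Option.elim, smul_smul, ← Finset.sum_smul, mul_sub,
    Finset.sum_sub_distrib, ← Finset.sum_mul]
  congr 1
  module

theorem exists_hasACDerivOn_smul_drift_of_zero_mem_interior [FiniteDimensional ℝ A]
    (hf : f ∈ skewAdjoint A) (hg : g ∈ skewAdjoint A) (hu : Measurable u)
    (hbound : ∀ t ∈ Set.uIcc a b, |u t| ≤ 1)
    (hγ : HasACDerivOn γ (fun t => γ t * (f + u t • g)) a b)
    (hunitary : ∀ t ∈ Set.uIcc a b, γ t ∈ unitary A)
    (hzero : 0 ∈ interior (endpointVariations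
      (fun t => skewPart A (γ t * g * star (γ t))) u a b)) :
    ∃ θ ∈ Set.Ioo (0 : ℝ) 1, ∃ w : ℝ → ℝ, Measurable w ∧ (∀ t ∈ Set.uIcc a b, |w t| ≤ θ) ∧
      ∃ X : ℝ → A, X a = γ a ∧ X b = γ b ∧
        HasACDerivOn X (fun t => X t * (θ • f + w t • g)) a b := by
  obtain ⟨n, y, hy, hspan, c, hc, hsum⟩ := exists_smul_sum_eq_of_mem_nhds_zero
    (mem_interior_iff_mem_nhds.1 hzero)
    (∫ t in a..b, skewPart A (γ t * (f + u t • g) * star (γ t)))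
  choose v hv hvbound hvy using hy
  obtain rfl := funext hvy
  obtain ⟨η, hη, k, hk, hlt, X, hX⟩ := exists_hasACDerivOn_smul_drift_of_span_eq_top hf hg hu
    hbound hγ hunitary hv hvbound hspan hc hsum
  have hksum : 0 ≤ ∑ i, k i := Finset.sum_nonneg fun i _ => (hk i).le
  exact ⟨1 - η, ⟨by linarith, sub_lt_self _ hη⟩,
    fun t => (1 - η - ∑ i, k i) * u t + ∑ i, k i * v i t, by fun_prop,
    fun t ht => abs_add_sum_mul_le (fun i => (hk i).le) (by linarith) (hbound t ht)
      fun i => hvbound i t ht, X, hX⟩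

end SlowerDrift

end ControlSystem

section MatrixCurves

open scoped Matrix.Norms.L2Operator

variable {n : Type*} [Fintype n] [DecidableEq n] {X x N : ℝ → Matrix n n ℝ} {a b : ℝ}

/-- Taking the entry at `(i, j)`, as a continuous linear map. -/
noncomputable def entryCLM (i j : n) : Matrix n n ℝ →L[ℝ] ℝ :=
  (Matrix.entryLinearMap ℝ ℝ i j).toContinuousLinearMap

theorem hasACDerivOn_of_entry_eq_add_integral (hx : IntervalIntegrable x volume a b)
    (hX : ∀ t ∈ Set.uIcc a b, ∀ i j, X t i j = X a i j + ∫ s in a..t, x s i j) :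
    HasACDerivOn X x a b := by
  refine .of_integral hx fun t ht => ?_
  ext i j
  rw [hX t ht i j, Matrix.add_apply]
  congr 1
  exact (entryCLM i j).intervalIntegral_comp_comm (hx.mono_set (Set.uIcc_subset_uIcc_left ht))

theorem entry_eq_add_integral_of_hasACDerivOn (hX : HasACDerivOn X x a b) {t : ℝ}
    (ht : t ∈ Set.uIcc a b) (i j : n) : X t i j = X a i j + ∫ s in a..t, x s i j := by
  have hint := (hX.clm_comp (entryCLM i j)).integral_eq Set.left_mem_uIcc ht
  exact (eq_add_of_sub_eq' hint.symm)

theorem mem_orthogonalGroup_of_hasACDerivOn (hX : HasACDerivOn X (fun t => X t * N t) a b)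
    (hN : ∀ t ∈ Set.uIcc a b, N t ∈ skewAdjoint (Matrix n n ℝ)) (ha : X a ∈ orthogonalGroup n ℝ)
    {t : ℝ} (ht : t ∈ Set.uIcc a b) : X t ∈ orthogonalGroup n ℝ := by
  rw [mem_orthogonalGroup_iff] at ha ⊢
  exact (mul_star_eq_of_hasACDerivOn hX hN ht).trans ha

theorem mem_specialOrthogonalGroup_of_hasACDerivOn
    (hX : HasACDerivOn X (fun t => X t * N t) a b)
    (hN : ∀ t ∈ Set.uIcc a b, N t ∈ skewAdjoint (Matrix n n ℝ))
    (ha : X a ∈ specialOrthogonalGroup n ℝ) {t : ℝ} (ht : t ∈ Set.uIcc a b) :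
    X t ∈ specialOrthogonalGroup n ℝ := by
  rw [mem_specialOrthogonalGroup_iff] at ha ⊢
  have horth : ∀ s ∈ Set.uIcc a b, X s ∈ orthogonalGroup n ℝ := fun s hs =>
    mem_orthogonalGroup_of_hasACDerivOn hX hN ha.1 hs
  have hsq : Set.EqOn ((fun s => (X s).det) ^ 2) (1 ^ 2) (Set.uIcc a b) := fun s hs => by
    simpa [sq] using congrArg det ((mem_orthogonalGroup_iff n ℝ).1 (horth s hs))
  exact ⟨horth t ht, isPreconnected_uIcc.eq_of_sq_eq
    (continuous_id.matrix_det.comp_continuousOn hX.ac.continuousOn) continuousOn_const hsq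
    (fun _ => one_ne_zero) Set.left_mem_uIcc ha.2 ht⟩

end MatrixCurves

section AdmissiblePairs

open scoped Matrix.Norms.L2Operator

variable {α a b : ℝ} {γ : ℝ → Matrix (Fin 3) (Fin 3) ℝ} {u : ℝ → ℝ}

theorem fM_mem_skewAdjoint (α : ℝ) : fM α ∈ skewAdjoint (Matrix (Fin 3) (Fin 3) ℝ) := by
  rw [skewAdjoint.mem_iff]
  ext i j
  fin_cases i <;> fin_cases j <;> simp [fM]

theorem gM_mem_skewAdjoint (α : ℝ) : gM α ∈ skewAdjoint (Matrix (Fin 3) (Fin 3) ℝ) := by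
  rw [skewAdjoint.mem_iff]
  ext i j
  fin_cases i <;> fin_cases j <;> simp [gM]

namespace AdmissiblePair

theorem uIcc_eq_Icc (h : AdmissiblePair α a b γ u) : Set.uIcc a b = Set.Icc a b :=
  Set.uIcc_of_le h.hab

theorem abs_control_le_one (h : AdmissiblePair α a b γ u) : ∀ t ∈ Set.uIcc a b, |u t| ≤ 1 :=
  h.uIcc_eq_Icc ▸ h.hubound

theorem mem_specialOrthogonalGroup (h : AdmissiblePair α a b γ u) {t : ℝ}
    (ht : t ∈ Set.uIcc a b) : γ t ∈ specialOrthogonalGroup (Fin 3) ℝ := by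
  rw [mem_specialOrthogonalGroup_iff, mem_orthogonalGroup_iff]
  exact h.hso3 t (h.uIcc_eq_Icc ▸ ht)

theorem hasACDerivOn (h : AdmissiblePair α a b γ u) :
    HasACDerivOn γ (fun t => γ t * (fM α + u t • gM α)) a b := by
  have hlinear : IntervalIntegrable (fun t => fM α + u t • gM α) volume a b :=
    intervalIntegrable_const.add
      (intervalIntegrable_smul_of_abs_le h.humeas h.abs_control_le_one continuousOn_const)
  exact hasACDerivOn_of_entry_eq_add_integral
    (hlinear.continuousOn_mul (h.uIcc_eq_Icc ▸ h.hcont))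
    fun t ht => h.hode t (h.uIcc_eq_Icc ▸ ht)

theorem of_hasACDerivOn_smul_drift {X : ℝ → Matrix (Fin 3) (Fin 3) ℝ} {w : ℝ → ℝ} {θ : ℝ}
    (hab : a ≤ b) (hθ : 0 < θ) (hw : Measurable w) (hbound : ∀ t ∈ Set.uIcc a b, |w t| ≤ θ)
    (hX : HasACDerivOn X (fun t => X t * (θ • fM α + w t • gM α)) a b)
    (ha : X a ∈ specialOrthogonalGroup (Fin 3) ℝ) :
    AdmissiblePair α a (a + θ * (b - a)) (fun t => X (θ⁻¹ * t + (a - θ⁻¹ * a)))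
      (fun t => θ⁻¹ * w (θ⁻¹ * t + (a - θ⁻¹ * a))) := by
  have hmaps : Set.MapsTo (fun t => θ⁻¹ * t + (a - θ⁻¹ * a)) (Set.Icc a (a + θ * (b - a)))
      (Set.uIcc a b) := fun t ht => by
    have hle : θ⁻¹ * (t - a) ≤ b - a := (inv_mul_le_iff₀ hθ).2 (by linarith [ht.2])
    have hnonneg : 0 ≤ θ⁻¹ * (t - a) := mul_nonneg (inv_nonneg.2 hθ.le) (sub_nonneg.2 ht.1)
    exact Set.Icc_subset_uIcc ⟨by linarith, by linarith⟩
  have hskew : ∀ t ∈ Set.uIcc a b, θ • fM α + w t • gM α ∈ skewAdjoint _ := fun t _ =>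
    add_mem (skewAdjoint.smul_mem _ (fM_mem_skewAdjoint α))
      (skewAdjoint.smul_mem _ (gM_mem_skewAdjoint α))
  refine ⟨le_add_of_nonneg_right (mul_nonneg hθ.le (sub_nonneg.2 hab)), by fun_prop,
    fun t ht => ?_, fun t ht => ?_, hX.ac.continuousOn.comp (by fun_prop) hmaps,
    fun t ht i j => ?_⟩
  · rw [abs_mul, abs_of_pos (inv_pos.2 hθ), inv_mul_le_one₀ hθ]
    exact hbound _ (hmaps ht)
  · simpa only [mem_specialOrthogonalGroup_iff, mem_orthogonalGroup_iff] using
      mem_specialOrthogonalGroup_of_hasACDerivOn hX hskew ha (hmaps ht)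
  · have hscale : ∀ r : ℝ, fM α + (θ⁻¹ * r) • gM α = θ⁻¹ • (θ • fM α + r • gM α) := fun r => by
      rw [smul_add, smul_smul, smul_smul, inv_mul_cancel₀ hθ.ne', one_smul]
    simp only [hscale, mul_smul_comm, Matrix.smul_apply, smul_eq_mul,
      intervalIntegral.integral_const_mul]
    rw [mul_integral_comp_mul_add (f := fun s => (X s * (θ • fM α + w s • gM α)) i j)]
    simpa using entry_eq_add_integral_of_hasACDerivOn hX (hmaps ht) i j

end AdmissiblePair

namespace TimeOptimal

theorem one_le_of_hasACDerivOn_smul_drift {X : ℝ → Matrix (Fin 3) (Fin 3) ℝ} {w : ℝ → ℝ} {θ : ℝ}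
    (h : TimeOptimal α a b γ u) (hab : a < b) (hθ : 0 < θ) (hw : Measurable w)
    (hbound : ∀ t ∈ Set.uIcc a b, |w t| ≤ θ)
    (hX : HasACDerivOn X (fun t => X t * (θ • fM α + w t • gM α)) a b) (ha : X a = γ a)
    (hb : X b = γ b) : 1 ≤ θ := by
  have hadm := AdmissiblePair.of_hasACDerivOn_smul_drift hab.le hθ hw hbound hX
    (ha ▸ h.1.mem_specialOrthogonalGroup Set.left_mem_uIcc)
  have hb' : θ⁻¹ * (a + θ * (b - a)) + (a - θ⁻¹ * a) = b := by field_simp; ring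
  have hle := h.2 _ _ _ _ hadm (by simpa using ha) (by simpa only [hb'] using hb)
  rw [add_sub_cancel_left] at hle
  exact le_of_mul_le_mul_right (by rwa [one_mul]) (sub_pos.2 hab)

theorem zero_notMem_interior_endpointVariations (h : TimeOptimal α a b γ u) (hab : a < b) :
    0 ∉ interior (endpointVariations
      (fun t => skewPart (Matrix (Fin 3) (Fin 3) ℝ) (γ t * gM α * star (γ t))) u a b) := by
  intro hzero
  obtain ⟨θ, ⟨hθ, hθlt⟩, w, hw, hbound, X, ha, hb, hX⟩ :=
    exists_hasACDerivOn_smul_drift_of_zero_mem_interior (fM_mem_skewAdjoint α)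
      (gM_mem_skewAdjoint α) h.1.humeas h.1.abs_control_le_one h.1.hasACDerivOn
      (fun t ht => (h.1.mem_specialOrthogonalGroup ht).1) hzero
  exact hθlt.not_ge (h.one_le_of_hasACDerivOn_smul_drift hab hθ hw hbound hX ha hb)

end TimeOptimal

end AdmissiblePairs

section Momentum

variable {A : Type*} [NormedRing A] [NormedAlgebra ℝ A] [StarRing A] [StarModule ℝ A]
  [ContinuousStar A] {p : skewAdjoint.submodule ℝ A →L[ℝ] ℝ} {X N : ℝ → A} {a b : ℝ}

/-- The pairing of the covector `p`, seen from the point `U` of the unitary group, with the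
left-invariant vector field generated by an element of `A`. -/
noncomputable def momentum (p : skewAdjoint.submodule ℝ A →L[ℝ] ℝ) (U : A) : A →ₗ[ℝ] ℝ :=
  (p ∘L skewPart A).toLinearMap ∘ₗ LinearMap.mulLeftRight ℝ (U, star U)

theorem momentum_apply (U M : A) : momentum p U M = p (skewPart A (U * M * star U)) := rfl

theorem hasACDerivOn_momentum (hX : HasACDerivOn X (fun t => X t * N t) a b)
    (hN : ∀ t ∈ Set.uIcc a b, N t ∈ skewAdjoint A) (M : A) :
    HasACDerivOn (fun t => momentum p (X t) M) (fun t => momentum p (X t) ⁅N t, M⁆) a b :=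
  (hasACDerivOn_conj hX hN M).clm_comp (p ∘L skewPart A)

theorem eq_zero_of_momentum_eq_zero {U : A} (hU : U ∈ unitary A)
    (hzero : ∀ S ∈ skewAdjoint A, momentum p U S = 0) : p = 0 := by
  ext S
  have hS := hzero _ (skewAdjoint.conjugate' S.2 U)
  rw [momentum_apply, show U * (star U * S * U) * star U = U * star U * S * (U * star U) by
    noncomm_ring, Unitary.mul_star_self_of_mem hU, one_mul, mul_one, skewPart_coe] at hS
  exact hS

end Momentum

section SkewMatrices

/-- The generator of the rotations of the first two coordinates. -/
def rot₁₂ : Matrix (Fin 3) (Fin 3) ℝ := !![0,1,0; -1,0,0; 0,0,0]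

/-- The generator of the rotations of the last two coordinates. -/
def rot₂₃ : Matrix (Fin 3) (Fin 3) ℝ := !![0,0,0; 0,0,1; 0,-1,0]

/-- The generator of the rotations of the first and the last coordinate. -/
def rot₁₃ : Matrix (Fin 3) (Fin 3) ℝ := !![0,0,1; 0,0,0; -1,0,0]

theorem lie_rot₁₂ (c s : ℝ) : ⁅c • rot₁₂ + s • rot₂₃, rot₁₂⁆ = -(s • rot₁₃) := by
  rw [Ring.lie_def]
  ext i j
  fin_cases i <;> fin_cases j <;> simp [rot₁₂, rot₂₃, rot₁₃]

theorem lie_rot₂₃ (c s : ℝ) : ⁅c • rot₁₂ + s • rot₂₃, rot₂₃⁆ = c • rot₁₃ := by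
  rw [Ring.lie_def]
  ext i j
  fin_cases i <;> fin_cases j <;> simp [rot₁₂, rot₂₃, rot₁₃]

theorem lie_rot₁₃ (c s : ℝ) : ⁅c • rot₁₂ + s • rot₂₃, rot₁₃⁆ = s • rot₁₂ - c • rot₂₃ := by
  rw [Ring.lie_def]
  ext i j
  fin_cases i <;> fin_cases j <;> simp [rot₁₂, rot₂₃, rot₁₃]

theorem eq_smul_rot_add_of_mem_skewAdjoint {S : Matrix (Fin 3) (Fin 3) ℝ}
    (hS : S ∈ skewAdjoint (Matrix (Fin 3) (Fin 3) ℝ)) :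
    S = S 0 1 • rot₁₂ + S 1 2 • rot₂₃ + S 0 2 • rot₁₃ := by
  have hstar : star S = -S := skewAdjoint.mem_iff.1 hS
  have hneg : ∀ i j, S j i = -S i j := congrFun₂ hstar
  have hdiag : ∀ i, S i i = 0 := fun i => self_eq_neg.1 (hneg i i)
  ext i j
  fin_cases i <;> fin_cases j <;>
    simp [rot₁₂, rot₂₃, rot₁₃, hdiag, hneg 0 1, hneg 0 2, hneg 1 2]

end SkewMatrices

section MaximumPrinciple

open scoped Matrix.Norms.L2Operator

variable {α a b : ℝ} {γ : ℝ → Matrix (Fin 3) (Fin 3) ℝ} {u : ℝ → ℝ}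
  {p : skewAdjoint.submodule ℝ (Matrix (Fin 3) (Fin 3) ℝ) →L[ℝ] ℝ}

theorem AdmissiblePair.continuousOn_skewPart_conj (h : AdmissiblePair α a b γ u)
    {M : Matrix (Fin 3) (Fin 3) ℝ} :
    ContinuousOn (fun t => skewPart _ (γ t * M * star (γ t))) (Set.uIcc a b) :=
  have hγ := h.hasACDerivOn.ac.continuousOn
  (skewPart _).continuous.comp_continuousOn ((hγ.mul continuousOn_const).mul hγ.star)

theorem AdmissiblePair.hasACDerivOn_momentum (h : AdmissiblePair α a b γ u)
    (M : Matrix (Fin 3) (Fin 3) ℝ) :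
    HasACDerivOn (fun t => momentum p (γ t) M)
      (fun t => momentum p (γ t) ⁅cos α • rot₁₂ + (sin α * u t) • rot₂₃, M⁆) a b := by
  refine (_root_.hasACDerivOn_momentum h.hasACDerivOn (fun t _ => add_mem (fM_mem_skewAdjoint α)
    (skewAdjoint.smul_mem _ (gM_mem_skewAdjoint α))) M).congr_deriv fun t _ => ?_
  rw [mul_comm, mul_smul]
  rfl

theorem AdmissiblePair.isExtremal (h : AdmissiblePair α a b γ u) (hab : a ≤ b) (hp : p ≠ 0)
    (hle : ∀ y ∈ endpointVariations (fun t => skewPart _ (γ t * gM α * star (γ t))) u a b,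
      p y ≤ 0) :
    IsExtremal (cos α) (sin α) (fun t => momentum p (γ t) rot₁₂) (fun t => momentum p (γ t) rot₂₃)
      (fun t => momentum p (γ t) rot₁₃) u a b where
  abs_le_one := h.abs_control_le_one
  hasACDerivOn₁ := (h.hasACDerivOn_momentum _).congr_deriv fun t _ => by
    simp only [lie_rot₁₂, map_neg, map_smul, smul_eq_mul]
  hasACDerivOn₂ := (h.hasACDerivOn_momentum _).congr_deriv fun t _ => by
    simp only [lie_rot₂₃, map_smul, smul_eq_mul]
  hasACDerivOn₃ := (h.hasACDerivOn_momentum _).congr_deriv fun t _ => by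
    simp only [lie_rot₁₃, map_sub, map_smul, smul_eq_mul]
  maximality := by
    have := FiniteDimensional.complete ℝ (skewAdjoint.submodule ℝ (Matrix (Fin 3) (Fin 3) ℝ))
    have hmomentum : ∀ t, sin α * momentum p (γ t) rot₂₃ =
        p (skewPart _ (γ t * gM α * star (γ t))) := fun t =>
      ((momentum p (γ t)).map_smul (sin α) rot₂₃).symm
    simp only [hmomentum]
    exact ae_mul_apply_eq_abs_of_endpointVariations_nonpos hab h.humeas h.abs_control_le_one
      h.continuousOn_skewPart_conj hle
  nontrivial := by
    contrapose! hp
    obtain ⟨h₁₂, h₂₃, h₁₃⟩ := hp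
    refine eq_zero_of_momentum_eq_zero (h.mem_specialOrthogonalGroup Set.left_mem_uIcc).1
      fun S hS => ?_
    rw [eq_smul_rot_add_of_mem_skewAdjoint hS]
    simp [h₁₂, h₂₃, h₁₃]

theorem TimeOptimal.exists_isExtremal (h : TimeOptimal α a b γ u) (hab : a < b) :
    ∃ m₁ m₂ m₃ : ℝ → ℝ, IsExtremal (cos α) (sin α) m₁ m₂ m₃ u a b := by
  obtain ⟨p, hp, hle⟩ := exists_ne_zero_forall_nonpos_of_notMem_interior
    (convex_endpointVariations h.1.humeas h.1.abs_control_le_one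
      h.1.continuousOn_skewPart_conj)
    (zero_mem_endpointVariations h.1.humeas h.1.abs_control_le_one)
    (h.zero_notMem_interior_endpointVariations hab)
  exact ⟨_, _, _, h.1.isExtremal hab.le hp hle⟩

end MaximumPrinciple

theorem finite_concatenation_general (α a b : ℝ) (γ : ℝ → Matrix (Fin 3) (Fin 3) ℝ) (u : ℝ → ℝ)
    (hsin : sin α ≠ 0) (hcos : cos α ≠ 0) (hopt : TimeOptimal α a b γ u) :
    ∃ (n : ℕ) (τ : ℕ → ℝ), τ 0 = a ∧ τ n = b ∧ (∀ i < n, τ i < τ (i + 1)) ∧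
      ∀ i < n, ∃ c : ℝ, (c = 1 ∨ c = -1 ∨ c = 0) ∧
        ∀ᵐ t ∂(volume.restrict (Set.Icc (τ i) (τ (i + 1)))), u t = c := by
  rcases hopt.1.hab.eq_or_lt with rfl | hab
  · exact ⟨0, fun _ => a, rfl, rfl, by simp, by simp⟩
  · obtain ⟨m₁, m₂, m₃, hm⟩ := hopt.exists_isExtremal hab
    exact hm.exists_finite_concatenation hab.le hcos hsin

/-- Every time optimal trajectory of `(Σ)` is a finite concatenation of bang and
singular arcs. -/
theorem finite_concatenation (α a b : ℝ) (γ : ℝ → Matrix (Fin 3) (Fin 3) ℝ) (u : ℝ → ℝ)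
    (hα : α ∈ Set.Ioo 0 (π / 2)) (hopt : TimeOptimal α a b γ u) :
    ∃ (n : ℕ) (τ : ℕ → ℝ), τ 0 = a ∧ τ n = b ∧ (∀ i < n, τ i < τ (i + 1)) ∧
      ∀ i < n, ∃ c : ℝ, (c = 1 ∨ c = -1 ∨ c = 0) ∧
        ∀ᵐ t ∂(volume.restrict (Set.Icc (τ i) (τ (i + 1)))), u t = c :=
  finite_concatenation_general α a b γ u
    (sin_pos_of_pos_of_lt_pi hα.1 (hα.2.trans (half_lt_self pi_pos))).ne'
    (cos_pos_of_mem_Ioo ⟨by linarith [hα.1, pi_pos], hα.2⟩).ne' hopt
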